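/- arXiv:1708.01113 — 4 statements merged into one kernel-verified Lean document; each statement's English description precedes it below -/
import Mathlib

section
/- Let N be a set of n k-dimensional subspaces of F_q^v that pairwise intersect trivially and whose members together span F_q^v, let a_i denote the number of hyperplanes H of F_q^v containing exactly i elements of N, and for each integer i with 2k ≤ i ≤ 3k let b_i denote the number of ordered triples (B_1,B_2,B_3) of pairwise distinct elements of N whose span ⟨B_1,B_2,B_3⟩ has dimension i. Then: (1) the sum over i of i(i−1)(i−2)·a_i equals the sum over i from 2k to 3k of b_i·(q^{v−i}−1)/(q−1); and (2) the sum over i from 2k to 3k of b_i equals n(n−1)(n−2). -/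
/-!
Count pairs `(t, H)` where `t` is an ordered triple of pairwise distinct members of `N` and `H` is a
hyperplane containing the span of `t`. A hyperplane containing `m` members of `N` contains
`m (m - 1) (m - 2)` triples. Conversely, the hyperplanes containing a `d`-dimensional subspace `W`
are the hyperplanes of the quotient by `W`, hence by duality the lines of a space of dimension
`v - d`, of which there are `(q ^ (v - d) - 1) / (q - 1)`. A hyperplane cannot contain every member
of the spanning set `N`, so only `m < n` occurs. Disjointness of the members of `N` places the
dimensions of the spans of triples between `2k` and `3k`.
-/

open Finset Module

section Combinatorics

variable {α β : Type*} [DecidableEq α]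

/-- Ordered triples of pairwise distinct elements of `s`, the analogue of `Finset.offDiag` for
triples. They are encoded as nested pairs. -/
def distinctTriples (s : Finset α) : Finset (α × α × α) :=
  {t ∈ s ×ˢ s ×ˢ s | t.1 ≠ t.2.1 ∧ t.1 ≠ t.2.2 ∧ t.2.1 ≠ t.2.2}

theorem mem_distinctTriples {s : Finset α} {t : α × α × α} :
    t ∈ distinctTriples s ↔
      t.1 ∈ s ∧ t.2.1 ∈ s ∧ t.2.2 ∈ s ∧ t.1 ≠ t.2.1 ∧ t.1 ≠ t.2.2 ∧ t.2.1 ≠ t.2.2 := by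
  simp only [distinctTriples, mem_filter, mem_product, and_assoc]

theorem card_distinctTriples (s : Finset α) :
    #(distinctTriples s) = #s * (#s - 1) * (#s - 2) := by
  calc #(distinctTriples s)
      = #(s.sigma fun x ↦ (s.erase x).offDiag) := by
        refine card_nbij' (fun t ↦ ⟨t.1, t.2⟩) (fun p ↦ (p.1, p.2)) ?_ ?_ ?_ ?_ <;>
          grind [mem_distinctTriples, Set.MapsTo, Set.LeftInvOn]
    _ = ∑ x ∈ s, (#s - 1) * (#s - 2) := by
        rw [card_sigma]
        refine sum_congr rfl fun x hx ↦ ?_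
        rw [offDiag_card, card_erase_of_mem hx, ← Nat.mul_sub_one, Nat.sub_sub]
    _ = #s * (#s - 1) * (#s - 2) := by rw [sum_const, smul_eq_mul, mul_assoc]

theorem distinctTriples_filter_le [SemilatticeSup α] [DecidableLE α] (s : Finset α) (c : α) :
    distinctTriples {x ∈ s | x ≤ c} = {t ∈ distinctTriples s | t.1 ⊔ t.2.1 ⊔ t.2.2 ≤ c} := by
  ext t
  simp only [mem_distinctTriples, mem_filter, sup_le_iff]
  tauto

theorem sum_card_distinctTriples_filter_le [SemilatticeSup α] [DecidableLE α] (s C : Finset α) :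
    ∑ c ∈ C, #(distinctTriples {x ∈ s | x ≤ c}) =
      ∑ t ∈ distinctTriples s, #{c ∈ C | t.1 ⊔ t.2.1 ⊔ t.2.2 ≤ c} := by
  simp_rw [distinctTriples_filter_le]
  exact sum_card_bipartiteAbove_eq_sum_card_bipartiteBelow
    fun c (t : α × α × α) ↦ t.1 ⊔ t.2.1 ⊔ t.2.2 ≤ c

theorem sum_mul_card_fiber {s : Finset β} {t : Finset α} {g : β → α} (h : ∀ x ∈ s, g x ∈ t)
    (f : α → ℕ) : ∑ j ∈ t, f j * #{x ∈ s | g x = j} = ∑ x ∈ s, f (g x) := by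
  simp_rw [← sum_fiberwise_of_maps_to' h f, sum_const, smul_eq_mul, mul_comm]

end Combinatorics

theorem card_filter_le_lt_card_of_sSup_eq_top {α : Type*} [CompleteLattice α] [DecidableLE α]
    {s : Finset α} (hs : sSup (s : Set α) = ⊤) {c : α} (hc : c ≠ ⊤) : #{x ∈ s | x ≤ c} < #s := by
  refine card_lt_card (filter_ssubset.mpr ?_)
  by_contra! hle
  exact hc (top_le_iff.mp (hs ▸ sSup_le hle))

section Subspaces

variable {F V : Type*}

section DivisionRing

variable [DivisionRing F] [AddCommGroup V] [Module F V]

theorem isAtom_iff_finrank_eq_one {L : Submodule F V} : IsAtom L ↔ finrank F L = 1 :=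
  isSimpleModule_iff_isAtom.symm.trans isSimpleModule_iff_finrank_eq_one

theorem isCoatom_iff_finrank_add_one_eq [FiniteDimensional F V] {H : Submodule F V} :
    IsCoatom H ↔ finrank F H + 1 = finrank F V := by
  rw [← isSimpleModule_iff_isCoatom, isSimpleModule_iff_finrank_eq_one,
    ← H.finrank_quotient_add_finrank]
  lia

theorem finrank_sup_sup_mem_Icc [FiniteDimensional F V] {U₁ U₂ U₃ : Submodule F V} {k : ℕ}
    (h₁ : finrank F U₁ = k) (h₂ : finrank F U₂ = k) (h₃ : finrank F U₃ = k)
    (h : Disjoint U₁ U₂) : finrank F ↥(U₁ ⊔ U₂ ⊔ U₃) ∈ Icc (2 * k) (3 * k) := by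
  have h₁₂ : finrank F ↥(U₁ ⊔ U₂) = 2 * k := by
    have := Submodule.finrank_sup_add_finrank_inf_eq U₁ U₂
    rw [h.eq_bot, finrank_bot] at this
    lia
  have lower : finrank F ↥(U₁ ⊔ U₂) ≤ finrank F ↥(U₁ ⊔ U₂ ⊔ U₃) :=
    Submodule.finrank_mono le_sup_left
  have upper := Submodule.finrank_add_le_finrank_add_finrank (U₁ ⊔ U₂) U₃
  rw [mem_Icc]
  lia

end DivisionRing

variable [Field F] [Finite F] [AddCommGroup V] [Module F V] [FiniteDimensional F V]

variable (F V) in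
theorem natCard_isAtom_submodule :
    Nat.card {L : Submodule F V // IsAtom L} =
      (Nat.card F ^ finrank F V - 1) / (Nat.card F - 1) := by
  simp_rw [isAtom_iff_finrank_eq_one]
  rw [← Nat.card_congr (Projectivization.equivSubmodule F V), Projectivization.card'',
    natCard_eq_pow_finrank (K := F)]

variable (F V) in
theorem natCard_isCoatom_submodule :
    Nat.card {H : Submodule F V // IsCoatom H} =
      (Nat.card F ^ finrank F V - 1) / (Nat.card F - 1) := by
  let e : Submodule F V ≃o (Submodule F (Dual F V))ᵒᵈ := Subspace.orderIsoFiniteDimensional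
  calc Nat.card {H : Submodule F V // IsCoatom H}
      = Nat.card {L : Submodule F (Dual F V) // IsAtom L} :=
        Nat.card_congr <| (e.toEquiv.trans OrderDual.ofDual).subtypeEquiv fun H ↦
          (e.isCoatom_iff H).symm
    _ = (Nat.card F ^ finrank F V - 1) / (Nat.card F - 1) := by
        rw [natCard_isAtom_submodule, Subspace.dual_finrank_eq]

theorem ncard_isCoatom_and_le (W : Submodule F V) :
    {H : Submodule F V | IsCoatom H ∧ W ≤ H}.ncard =
      (Nat.card F ^ (finrank F V - finrank F W) - 1) / (Nat.card F - 1) := by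
  have isCoatom_coe_iff (H : Set.Ici W) : IsCoatom H ↔ IsCoatom (H : Submodule F V) :=
    ⟨IsCoatom.of_isCoatom_coe_Ici, fun h ↦ h.Ici H.2⟩
  calc {H : Submodule F V | IsCoatom H ∧ W ≤ H}.ncard
      = Nat.card {H : Set.Ici W // IsCoatom (H : Submodule F V)} :=
        Nat.card_congr <| (Equiv.subtypeEquivRight fun _ ↦ and_comm).trans
          (Equiv.subtypeSubtypeEquivSubtypeInter _ _).symm
    _ = Nat.card {H : Submodule F (V ⧸ W) // IsCoatom H} :=
        Nat.card_congr <| W.comapMkQRelIso.symm.toEquiv.subtypeEquiv fun H ↦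
          (isCoatom_coe_iff H).symm.trans (W.comapMkQRelIso.symm.isCoatom_iff H).symm
    _ = (Nat.card F ^ (finrank F V - finrank F W) - 1) / (Nat.card F - 1) := by
        rw [natCard_isCoatom_submodule, W.finrank_quotient]

open Classical in
theorem sum_isCoatom_card_distinctTriples_filter_le [Fintype (Submodule F V)]
    (N : Finset (Submodule F V)) :
    ∑ H : Submodule F V with IsCoatom H, #(distinctTriples {U ∈ N | U ≤ H}) =
      ∑ t ∈ distinctTriples N,
        (Nat.card F ^ (finrank F V - finrank F ↥(t.1 ⊔ t.2.1 ⊔ t.2.2)) - 1) /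
          (Nat.card F - 1) := by
  rw [sum_card_distinctTriples_filter_le]
  refine sum_congr rfl fun t _ ↦ ?_
  rw [← ncard_isCoatom_and_le, filter_filter, ← Set.ncard_coe_finset, coe_filter_univ]

theorem vector_space_partition_triple_counts_general
    (N : Finset (Submodule F V)) (hspan : sSup (N : Set (Submodule F V)) = ⊤)
    (D : Finset ℕ)
    (hD : ∀ U₁ ∈ N, ∀ U₂ ∈ N, ∀ U₃ ∈ N, U₁ ≠ U₂ → U₁ ≠ U₃ → U₂ ≠ U₃ →
      finrank F ↥(U₁ ⊔ U₂ ⊔ U₃) ∈ D)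
    (a : ℕ → ℕ)
    (ha : ∀ i, a i = {H : Submodule F V | IsCoatom H ∧ {U | U ∈ N ∧ U ≤ H}.ncard = i}.ncard)
    (b : ℕ → ℕ)
    (hb : ∀ i, b i = {t : Submodule F V × Submodule F V × Submodule F V |
      t.1 ∈ N ∧ t.2.1 ∈ N ∧ t.2.2 ∈ N ∧ t.1 ≠ t.2.1 ∧ t.1 ≠ t.2.2 ∧ t.2.1 ≠ t.2.2 ∧
      finrank F ↥(t.1 ⊔ t.2.1 ⊔ t.2.2) = i}.ncard) :
    ∑ i ∈ range #N, i * (i - 1) * (i - 2) * a i =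
      ∑ i ∈ D, b i * ((Nat.card F ^ (finrank F V - i) - 1) / (Nat.card F - 1)) ∧
    ∑ i ∈ D, b i = #N * (#N - 1) * (#N - 2) := by
  classical
  have : Finite V := finite_of_finite F
  have := Fintype.ofFinite (Submodule F V)
  have card_members (H : Submodule F V) : {U | U ∈ N ∧ U ≤ H}.ncard = #{U ∈ N | U ≤ H} := by
    rw [← Set.ncard_coe_finset, coe_filter]
  have a_eq (i : ℕ) : a i = #{H ∈ {H : Submodule F V | IsCoatom H} | #{U ∈ N | U ≤ H} = i} := by
    simp_rw [ha, card_members, filter_filter, ← Set.ncard_coe_finset, coe_filter_univ]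
  have b_eq (i : ℕ) :
      b i = #((distinctTriples N).filter fun t : Submodule F V × Submodule F V × Submodule F V ↦
        finrank F ↥(t.1 ⊔ t.2.1 ⊔ t.2.2) = i) := by
    simp_rw [hb, ← Set.ncard_coe_finset, coe_filter, mem_distinctTriples, and_assoc]
  have members_lt : ∀ H ∈ ({H | IsCoatom H} : Finset (Submodule F V)),
      #{U ∈ N | U ≤ H} ∈ range #N := fun H hH ↦
    mem_range.mpr (card_filter_le_lt_card_of_sSup_eq_top hspan (mem_filter.mp hH).2.1)
  have finrank_mem : ∀ t ∈ distinctTriples N, finrank F ↥(t.1 ⊔ t.2.1 ⊔ t.2.2) ∈ D := by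
    intro t ht
    obtain ⟨h₁, h₂, h₃, h₁₂, h₁₃, h₂₃⟩ := mem_distinctTriples.mp ht
    exact hD _ h₁ _ h₂ _ h₃ h₁₂ h₁₃ h₂₃
  simp_rw [a_eq, b_eq]
  constructor
  · calc ∑ i ∈ range #N, i * (i - 1) * (i - 2) *
          #{H ∈ {H : Submodule F V | IsCoatom H} | #{U ∈ N | U ≤ H} = i}
        = ∑ H : Submodule F V with IsCoatom H, #(distinctTriples {U ∈ N | U ≤ H}) := by
          simp_rw [sum_mul_card_fiber members_lt fun i ↦ i * (i - 1) * (i - 2),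
            card_distinctTriples]
      _ = ∑ t ∈ distinctTriples N,
            (Nat.card F ^ (finrank F V - finrank F ↥(t.1 ⊔ t.2.1 ⊔ t.2.2)) - 1) /
              (Nat.card F - 1) := sum_isCoatom_card_distinctTriples_filter_le N
      _ = _ := by
          rw [← sum_mul_card_fiber finrank_mem fun i ↦
            (Nat.card F ^ (finrank F V - i) - 1) / (Nat.card F - 1)]
          exact sum_congr rfl fun _ _ ↦ mul_comm _ _
  · rw [← card_eq_sum_card_fiberwise finrank_mem, card_distinctTriples]

end Subspaces

/-- Double counting of tuples `(B₁,B₂,B₃,H)` for a spanning set of `n` pairwise disjoint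
`k`-subspaces of `F_q^v`, where `b i` counts ordered triples of pairwise distinct elements
whose span has dimension `i`. -/
theorem vector_space_partition_triple_counts
    {F : Type} [Field F] [Fintype F] (q v k n : ℕ)
    (hq : q = Fintype.card F) (hk : 1 ≤ k) (hkv : k ≤ v)
    (N : Finset (Submodule F (Fin v → F))) (hn : N.card = n)
    (hdim : ∀ U ∈ N, Module.finrank F ↥U = k)
    (hdisj : ∀ U ∈ N, ∀ W ∈ N, U ≠ W → U ⊓ W = ⊥)
    (hspan : sSup (↑N : Set (Submodule F (Fin v → F))) = ⊤)
    (a : ℕ → ℕ)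
    (ha : ∀ i, a i = Set.ncard {H : Submodule F (Fin v → F) |
      Module.finrank F ↥H = v - 1 ∧
      Set.ncard {U : Submodule F (Fin v → F) | U ∈ N ∧ U ≤ H} = i})
    (b : ℕ → ℕ)
    (hb : ∀ i, b i = Set.ncard {t : Submodule F (Fin v → F) × Submodule F (Fin v → F) ×
        Submodule F (Fin v → F) |
      t.1 ∈ N ∧ t.2.1 ∈ N ∧ t.2.2 ∈ N ∧
      t.1 ≠ t.2.1 ∧ t.1 ≠ t.2.2 ∧ t.2.1 ≠ t.2.2 ∧
      Module.finrank F ↥(t.1 ⊔ t.2.1 ⊔ t.2.2) = i}) :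
    (∑ i ∈ Finset.range n, i * (i - 1) * (i - 2) * a i) =
      (∑ i ∈ Finset.Icc (2 * k) (3 * k), b i * ((q ^ (v - i) - 1) / (q - 1))) ∧
    (∑ i ∈ Finset.Icc (2 * k) (3 * k), b i) = n * (n - 1) * (n - 2) := by
  have hv : 1 ≤ v := hk.trans hkv
  have ha' (i : ℕ) : a i = Set.ncard {H : Submodule F (Fin v → F) |
      IsCoatom H ∧ Set.ncard {U : Submodule F (Fin v → F) | U ∈ N ∧ U ≤ H} = i} := by
    simp_rw [ha, isCoatom_iff_finrank_add_one_eq, finrank_fin_fun, eq_tsub_iff_add_eq_of_le hv]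
  have key := vector_space_partition_triple_counts_general N hspan (Finset.Icc (2 * k) (3 * k))
    (fun U₁ h₁ U₂ h₂ U₃ h₃ h₁₂ _ _ ↦ finrank_sup_sup_mem_Icc (hdim U₁ h₁) (hdim U₂ h₂)
      (hdim U₃ h₃) (disjoint_iff.mpr (hdisj U₁ h₁ U₂ h₂ h₁₂))) a ha' b hb
  rwa [hn, finrank_fin_fun, Nat.card_eq_fintype_card, ← hq] at key
end

section
/- Let N be a nonempty q^r-divisible set of n k-dimensional subspaces of F_q^v, where r ≥ 1. Then n ≥ q^k + 1. -/
/-!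
The functionals vanishing on a `k`-dimensional subspace form a subgroup of index `q ^ k` in the
dual. A finite family of subgroups, all of index at least `c ≥ 2`, can cover a group only if it has
more than `c` members, because the subgroups overlap in the identity.

If the modulus does not divide `#N`, then every hyperplane contains a member of `N`, so the
annihilators of the members of `N` cover the dual of `V`. If it does divide `#N`, then a hyperplane
containing one member `U₀` of `N` contains a second one, so the annihilators of the images of the
other members in `V ⧸ U₀` cover the dual of `V ⧸ U₀`.
-/

open Finset Module
open scoped Pointwise

@[to_additive]
theorem lt_card_of_subgroup_cover {G ι : Type*} [Group G] {s : Finset ι} {H : ι → Subgroup G}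
    {c : ℕ} (hc : 1 < c) (hH : ∀ i ∈ s, (H i).FiniteIndex → c ≤ (H i).index)
    (hcover : ⋃ i ∈ s, (H i : Set G) = Set.univ) : c < #s := by
  classical
  by_contra! hs
  replace hcover : ⋃ i ∈ s, (1 : G) • (H i : Set G) = Set.univ := by simpa only [one_smul]
  have index_inv_le : ∀ i ∈ s, ((H i).index : ℚ)⁻¹ ≤ (c : ℚ)⁻¹ := fun i hi ↦ by
    obtain h0 | h0 := eq_or_ne (H i).index 0
    · simp [h0]
    · have := hH i hi ⟨h0⟩
      gcongr
  have sum_eq_one : ∑ i ∈ s, ((H i).index : ℚ)⁻¹ = 1 := by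
    refine le_antisymm ?_ (Subgroup.one_le_sum_inv_index_of_leftCoset_cover hcover)
    calc ∑ i ∈ s, ((H i).index : ℚ)⁻¹ ≤ #s • (c : ℚ)⁻¹ := sum_le_card_nsmul _ _ _ index_inv_le
      _ ≤ c • (c : ℚ)⁻¹ := by gcongr
      _ = 1 := by rw [nsmul_eq_mul, mul_inv_cancel₀ (by positivity)]
  have disjoint_cover :=
    Subgroup.pairwiseDisjoint_leftCoset_cover_of_sum_inv_index_eq_one hcover sum_eq_one
  obtain ⟨k, hk, hkfin, hkle⟩ := Subgroup.exists_index_le_card_of_leftCoset_cover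
    (Subgroup.leftCoset_cover_filter_FiniteIndex hcover)
  have two_finite_index : 1 < #{i ∈ s | (H i).FiniteIndex} :=
    hc.trans_le ((hH k (mem_of_mem_filter k hk) hkfin).trans hkle)
  obtain ⟨i, hi, j, hj, hij⟩ := one_lt_card.mp two_finite_index
  have one_mem_cover (l : ι) : (1 : G) ∈ (1 : G) • (H l : Set G) := by
    rw [one_smul]
    exact one_mem (H l)
  exact Set.disjoint_left.mp (disjoint_cover hi hj hij) (one_mem_cover i) (one_mem_cover j)

theorem finrank_map_mkQ_of_disjoint {R M : Type*} [Ring R] [AddCommGroup M] [Module R M]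
    {U W : Submodule R M} (h : Disjoint U W) : finrank R (U.map W.mkQ) = finrank R U := by
  rw [← LinearMap.range_domRestrict]
  refine LinearMap.finrank_range_of_inj (LinearMap.injective_domRestrict_iff.mpr ?_)
  rwa [Submodule.ker_mkQ]

theorem finrank_add_one_of_isCoatom {K V : Type*} [DivisionRing K] [AddCommGroup V] [Module K V]
    [Module.Finite K V] {H : Submodule K V} (hH : IsCoatom H) :
    finrank K H + 1 = finrank K V := by
  rw [← Submodule.finrank_quotient_add_finrank H, add_comm,
    isSimpleModule_iff_finrank_eq_one.mp (isSimpleModule_iff_isCoatom.mpr hH)]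

section Field

variable {F V : Type*} [Field F] [AddCommGroup V] [Module F V]

theorem index_dualAnnihilator (U : Submodule F V) [Module.Finite F U] :
    U.dualAnnihilator.toAddSubgroup.index = Nat.card F ^ finrank F U := by
  rw [← Subspace.dual_finrank_eq (V := U), ← natCard_eq_pow_finrank]
  exact Nat.card_congr (Subspace.quotAnnihilatorEquiv U).toEquiv

theorem pow_lt_card_of_forall_exists_le_ker [Finite F] {ι : Type*} {s : Finset ι}
    {U : ι → Submodule F V} {k : ℕ} (hk : k ≠ 0) (hU : ∀ i ∈ s, k ≤ finrank F (U i))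
    (hcover : ∀ f : Dual F V, ∃ i ∈ s, U i ≤ LinearMap.ker f) :
    Nat.card F ^ k < #s := by
  refine lt_card_of_addSubgroup_cover (H := fun i ↦ (U i).dualAnnihilator.toAddSubgroup)
    (Nat.one_lt_pow hk Finite.one_lt_card) (fun i hi _ ↦ ?_) ?_
  · have : Module.Finite F (U i) := finite_of_finrank_pos (hk.bot_lt.trans_le (hU i hi))
    rw [index_dualAnnihilator]
    exact Nat.pow_le_pow_right Nat.card_pos (hU i hi)
  · refine Set.iUnion₂_eq_univ_iff.mpr fun f ↦ ?_
    obtain ⟨i, hi, hif⟩ := hcover f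
    exact ⟨i, hi, (Submodule.mem_dualAnnihilator f).mpr hif⟩

/-- `m`-divisible sets of subspaces, the `q ^ r`-divisible sets of the theorem for `m = q ^ r`: the
members intersect pairwise trivially, and the number of members contained in a hyperplane is
congruent to the total number of members modulo `m`. Hyperplanes are encoded as coatoms of the
lattice of subspaces, so `V` may have infinite dimension, and the members need not have equal
dimensions. -/
structure IsDivisibleSet (m : ℕ) (N : Finset (Submodule F V)) : Prop where
  pairwise_disjoint : (N : Set (Submodule F V)).Pairwise Disjoint
  card_modEq : ∀ H : Submodule F V, IsCoatom H → #N ≡ {U | U ∈ N ∧ U ≤ H}.ncard [MOD m]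

namespace IsDivisibleSet

variable {m : ℕ} {N : Finset (Submodule F V)}

theorem of_finrank [Module.Finite F V] (hdisj : (N : Set (Submodule F V)).Pairwise Disjoint)
    (hcard : ∀ H : Submodule F V, finrank F H + 1 = finrank F V →
      #N ≡ {U | U ∈ N ∧ U ≤ H}.ncard [MOD m]) :
    IsDivisibleSet m N :=
  ⟨hdisj, fun H hH ↦ hcard H (finrank_add_one_of_isCoatom hH)⟩

theorem dvd_card_iff_dvd_ncard_le_ker (hN : IsDivisibleSet m N) (f : Dual F V) :
    m ∣ #N ↔ m ∣ {U | U ∈ N ∧ U ≤ LinearMap.ker f}.ncard := by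
  obtain rfl | hf := eq_or_ne f 0
  · have all_le_ker : {U | U ∈ N ∧ U ≤ LinearMap.ker (0 : Dual F V)} = N := by ext; simp
    rw [all_le_ker, Set.ncard_coe_finset]
  · have hyperplane := LinearMap.isCoatom_ker_of_surjective (LinearMap.surjective hf)
    exact (hN.card_modEq _ hyperplane).dvd_iff dvd_rfl

theorem exists_mem_le_ker_of_not_dvd (hN : IsDivisibleSet m N) (hdvd : ¬ m ∣ #N)
    (f : Dual F V) : ∃ U ∈ N, U ≤ LinearMap.ker f :=
  Set.nonempty_of_ncard_ne_zero fun h ↦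
    hdvd <| (hN.dvd_card_iff_dvd_ncard_le_ker f).mpr (h ▸ dvd_zero m)

theorem exists_ne_mem_le_ker_of_dvd (hN : IsDivisibleSet m N) (hm : m ≠ 1) (hdvd : m ∣ #N)
    {U₀ : Submodule F V} (hU₀ : U₀ ∈ N) {f : Dual F V} (hf : U₀ ≤ LinearMap.ker f) :
    ∃ U ∈ N, U ≠ U₀ ∧ U ≤ LinearMap.ker f := by
  set S := {U | U ∈ N ∧ U ≤ LinearMap.ker f}
  have hdvdS : m ∣ S.ncard := (hN.dvd_card_iff_dvd_ncard_le_ker f).mp hdvd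
  have hSfin : S.Finite := N.finite_toSet.subset fun U hU ↦ hU.1
  have hSpos : 0 < S.ncard := (Set.ncard_pos hSfin).mpr ⟨U₀, hU₀, hf⟩
  have hSne : S.ncard ≠ 1 := fun h ↦ hm (Nat.dvd_one.mp (h ▸ hdvdS))
  obtain ⟨U, ⟨hU, hUf⟩, hne⟩ := Set.exists_ne_of_one_lt_ncard (by omega : 1 < S.ncard) U₀
  exact ⟨U, hU, hne, hUf⟩

end IsDivisibleSet

theorem divisible_set_card_lower_bound_general [Finite F] {m k : ℕ} (hm : m ≠ 1) (hk : k ≠ 0)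
    {N : Finset (Submodule F V)} (hN : IsDivisibleSet m N) (hne : N.Nonempty)
    (hdim : ∀ U ∈ N, k ≤ finrank F U) : Nat.card F ^ k + 1 ≤ #N := by
  classical
  by_cases hdvd : m ∣ #N
  · obtain ⟨U₀, hU₀⟩ := hne
    have finrank_image : ∀ U ∈ N.erase U₀, k ≤ finrank F (U.map U₀.mkQ) := fun U hU ↦ by
      obtain ⟨hUne, hU⟩ := mem_erase.mp hU
      rw [finrank_map_mkQ_of_disjoint (hN.pairwise_disjoint hU hU₀ hUne)]
      exact hdim U hU
    have images_cover : ∀ f : Dual F (V ⧸ U₀), ∃ U ∈ N.erase U₀,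
        U.map U₀.mkQ ≤ LinearMap.ker f := fun f ↦ by
      have hf : U₀ ≤ LinearMap.ker (f ∘ₗ U₀.mkQ) :=
        U₀.ker_mkQ.ge.trans (LinearMap.ker_le_ker_comp _ _)
      obtain ⟨U, hU, hUne, hUf⟩ := hN.exists_ne_mem_le_ker_of_dvd hm hdvd hU₀ hf
      exact ⟨U, mem_erase.mpr ⟨hUne, hU⟩, Submodule.map_le_iff_le_comap.mpr hUf⟩
    exact (pow_lt_card_of_forall_exists_le_ker hk finrank_image images_cover).trans
      (card_erase_lt_of_mem hU₀)
  · exact pow_lt_card_of_forall_exists_le_ker hk hdim (hN.exists_mem_le_ker_of_not_dvd hdvd)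

end Field

/-- A nonempty `q^r`-divisible set of `n` `k`-subspaces of `F_q^v` satisfies `n ≥ q^k + 1`. -/
theorem divisible_set_card_lower_bound
    {F : Type} [Field F] [Fintype F] (q v k r n : ℕ)
    (hq : q = Fintype.card F) (hk : 1 ≤ k) (hr : 1 ≤ r)
    (N : Finset (Submodule F (Fin v → F))) (hn : N.card = n) (hne : N.Nonempty)
    (hdim : ∀ U ∈ N, Module.finrank F ↥U = k)
    (hdisj : ∀ U ∈ N, ∀ W ∈ N, U ≠ W → U ⊓ W = ⊥)
    (hdiv : ∀ H : Submodule F (Fin v → F), Module.finrank F ↥H = v - 1 →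
      n ≡ Set.ncard {U : Submodule F (Fin v → F) | U ∈ N ∧ U ≤ H} [MOD q ^ r]) :
    q ^ k + 1 ≤ n := by
  subst hn hq
  have hN : IsDivisibleSet (Fintype.card F ^ r) N :=
    .of_finrank (fun U hU W hW hUW ↦ disjoint_iff.mpr (hdisj U hU W hW hUW))
      fun H hH ↦ hdiv H (by rw [finrank_fin_fun] at hH; omega)
  have hmod : Fintype.card F ^ r ≠ 1 := (Nat.one_lt_pow (by omega) Fintype.one_lt_card).ne'
  rw [← Nat.card_eq_fintype_card]
  exact divisible_set_card_lower_bound_general hmod (by omega) hN hne fun U hU ↦ (hdim U hU).ge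
end

section
/- Let N be a nonempty q^r-divisible set of n k-dimensional subspaces of F_q^v such that q^r divides n, and suppose r < k. Then n ≥ q^{k+r} − q^k + q^r. -/
/-!
Let `a φ` be the number of elements of `N` on which the functional `φ` vanishes. A `d`-dimensional
subspace of `V` is killed by `q ^ (dim V - d)` functionals; applied to the elements of `N` and to
the sums of two distinct ones, which have dimension `2 * k`, this gives `∑ φ, a φ` and
`∑ φ, a φ * (a φ - 1)`. As soon as `a φ` is nonzero it is at least `m = q ^ r`, so the second sum
is at least `m - 1` times the first, which says `(m - 1) * q ^ k < #N`. Divisibility of `#N` by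
`q ^ r` rounds this up to the theorem.
-/

open Finset Module

open scoped Classical in
/-- An `m`-divisible set of subspaces, for `m = q ^ r` the `q ^ r`-divisible sets of the paper.
The dimension of the elements is left free, and a hyperplane is a subspace of codimension one. -/
structure IsDivisibleSet_s11 {F V : Type*} [Field F] [AddCommGroup V] [Module F V]
    (m : ℕ) (N : Finset (Submodule F V)) : Prop where
  pairwise_disjoint : (N : Set (Submodule F V)).Pairwise Disjoint
  card_modEq : ∀ H : Submodule F V, finrank F H + 1 = finrank F V →
    #N ≡ #{U ∈ N | U ≤ H} [MOD m]

section

variable {F V : Type*} [Field F] [AddCommGroup V] [Module F V]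

theorem finrank_sup_of_disjoint {U W : Submodule F V} [FiniteDimensional F U]
    [FiniteDimensional F W] (h : Disjoint U W) :
    finrank F ↥(U ⊔ W) = finrank F U + finrank F W := by
  rw [← Submodule.finrank_sup_add_finrank_inf_eq, h.eq_bot, finrank_bot, add_zero]

variable [FiniteDimensional F V]

section Counting

variable [Fintype (Dual F V)]

open scoped Classical in
theorem pow_finrank_mul_card_filter_le_ker (U : Submodule F V) :
    Nat.card F ^ finrank F U * #{φ : Dual F V | U ≤ φ.ker} = Nat.card F ^ finrank F V := by
  have hcard : #{φ : Dual F V | U ≤ φ.ker} = Nat.card F ^ finrank F U.dualAnnihilator := by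
    rw [← natCard_eq_pow_finrank (K := F) (V := U.dualAnnihilator),
      ← Fintype.card_subtype, ← Nat.card_eq_fintype_card]
    exact Nat.card_congr (Equiv.subtypeEquivRight fun φ ↦ U.mem_dualAnnihilator φ |>.symm)
  rw [hcard, ← pow_add, Subspace.finrank_add_finrank_dualAnnihilator_eq]

open scoped Classical in
theorem pow_mul_sum_card_filter_le_ker {ι : Type*} (s : Finset ι) (U : ι → Submodule F V) {d : ℕ}
    (hU : ∀ i ∈ s, finrank F (U i) = d) :
    Nat.card F ^ d * ∑ φ : Dual F V, #{i ∈ s | U i ≤ φ.ker} = #s * Nat.card F ^ finrank F V := by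
  have hswap : ∑ φ : Dual F V, #{i ∈ s | U i ≤ φ.ker} =
      ∑ i ∈ s, #{φ : Dual F V | U i ≤ φ.ker} :=
    (sum_card_bipartiteAbove_eq_sum_card_bipartiteBelow _).symm
  rw [hswap, mul_sum, ← smul_eq_mul, ← sum_const]
  refine sum_congr rfl fun i hi ↦ ?_
  rw [← hU i hi, pow_finrank_mul_card_filter_le_ker]

open scoped Classical in
theorem pow_mul_sum_card_mul_card_pred {N : Finset (Submodule F V)} {k : ℕ}
    (hdim : ∀ U ∈ N, finrank F U = k) (hN : (N : Set (Submodule F V)).Pairwise Disjoint) :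
    Nat.card F ^ (k + k) *
        ∑ φ : Dual F V, #{U ∈ N | U ≤ φ.ker} * (#{U ∈ N | U ≤ φ.ker} - 1) =
      #N * (#N - 1) * Nat.card F ^ finrank F V := by
  have hpairs (φ : Dual F V) : #{U ∈ N | U ≤ φ.ker} * (#{U ∈ N | U ≤ φ.ker} - 1) =
      #{p ∈ N.offDiag | p.1 ⊔ p.2 ≤ φ.ker} := by
    rw [Nat.mul_sub_one, ← offDiag_card]
    congr 1
    ext p
    simp only [mem_offDiag, mem_filter, sup_le_iff]
    tauto
  have hsup : ∀ p ∈ N.offDiag, finrank F ↥(p.1 ⊔ p.2) = k + k := fun p hp ↦ by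
    obtain ⟨h₁, h₂, hne⟩ := mem_offDiag.1 hp
    rw [finrank_sup_of_disjoint (hN h₁ h₂ hne), hdim _ h₁, hdim _ h₂]
  simp_rw [hpairs]
  rw [pow_mul_sum_card_filter_le_ker _ _ hsup, offDiag_card, Nat.mul_sub_one]

end Counting

open scoped Classical in
theorem IsDivisibleSet_s11.dvd_card_filter_le_ker {m : ℕ} {N : Finset (Submodule F V)}
    (hN : IsDivisibleSet_s11 m N) (hdvd : m ∣ #N) (φ : Dual F V) : m ∣ #{U ∈ N | U ≤ φ.ker} := by
  obtain rfl | hφ := eq_or_ne φ 0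
  · simpa using hdvd
  · exact ((hN.card_modEq _ (Dual.finrank_ker_add_one_of_ne_zero hφ)).dvd_iff dvd_rfl).1 hdvd

variable [Finite F]

open scoped Classical in
theorem pred_mul_pow_lt_card_of_le_card_filter_le_ker {N : Finset (Submodule F V)} {k m : ℕ}
    (hne : N.Nonempty) (hdim : ∀ U ∈ N, finrank F U = k)
    (hN : (N : Set (Submodule F V)).Pairwise Disjoint)
    (hm : ∀ φ : Dual F V, ∀ U ∈ N, U ≤ φ.ker → m ≤ #{W ∈ N | W ≤ φ.ker}) :
    (m - 1) * Nat.card F ^ k < #N := by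
  have : Finite (Dual F V) := Module.finite_of_finite F
  have := Fintype.ofFinite (Dual F V)
  let a (φ : Dual F V) : ℕ := #{U ∈ N | U ≤ φ.ker}
  have hle (φ : Dual F V) : (m - 1) * a φ ≤ a φ * (a φ - 1) := by
    obtain h | ⟨U, hU⟩ := Finset.eq_empty_or_nonempty {U ∈ N | U ≤ φ.ker}
    · simp [a, h]
    · obtain ⟨hUN, hUφ⟩ := mem_filter.1 hU
      rw [mul_comm]
      exact Nat.mul_le_mul_left _ (Nat.sub_le_sub_right (hm φ U hUN hUφ) 1)
  have hpos : 0 < #N * Nat.card F ^ finrank F V :=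
    Nat.mul_pos hne.card_pos (pow_pos Nat.card_pos _)
  suffices (m - 1) * Nat.card F ^ k ≤ #N - 1 from
    this.trans_lt (Nat.sub_one_lt_of_lt hne.card_pos)
  refine Nat.le_of_mul_le_mul_left ?_ hpos
  calc #N * Nat.card F ^ finrank F V * ((m - 1) * Nat.card F ^ k)
      = Nat.card F ^ (k + k) * ((m - 1) * ∑ φ, a φ) := by
        rw [← pow_mul_sum_card_filter_le_ker N id hdim, pow_add]
        simp only [a, id]
        ring
    _ ≤ Nat.card F ^ (k + k) * ∑ φ, a φ * (a φ - 1) := by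
        rw [mul_sum]
        exact Nat.mul_le_mul_left _ (sum_le_sum fun φ _ ↦ hle φ)
    _ = #N * Nat.card F ^ finrank F V * (#N - 1) := by
        rw [pow_mul_sum_card_mul_card_pred hdim hN, mul_right_comm]

theorem divisible_set_card_lower_bound_dvd_small_r_general {N : Finset (Submodule F V)} {k r : ℕ}
    (hne : N.Nonempty) (hdim : ∀ U ∈ N, finrank F U = k)
    (hN : IsDivisibleSet_s11 (Nat.card F ^ r) N) (hdvd : Nat.card F ^ r ∣ #N) :
    Nat.card F ^ (k + r) - Nat.card F ^ max k r + Nat.card F ^ r ≤ #N := by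
  classical
  set q := Nat.card F
  have hq : 0 < q := Nat.card_pos
  have hlt : (q ^ r - 1) * q ^ k < #N :=
    pred_mul_pow_lt_card_of_le_card_filter_le_ker hne hdim hN.pairwise_disjoint fun φ U hU hφ ↦
      Nat.le_of_dvd (card_pos.2 ⟨U, mem_filter.2 ⟨hU, hφ⟩⟩) (hN.dvd_card_filter_le_ker hdvd φ)
  -- Weakening `q ^ k` to `q ^ max k r` makes every term of the bound a multiple of `q ^ r`.
  have hk : q ^ k ≤ q ^ max k r := Nat.pow_le_pow_right hq (le_max_left k r)
  have hmax : q ^ max k r ≤ q ^ (k + r) := Nat.pow_le_pow_right hq (by omega)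
  have hgap : q ^ (k + r) - q ^ max k r < #N := by
    rw [Nat.sub_one_mul, ← pow_add, add_comm r k] at hlt
    omega
  have hstep : q ^ r ≤ #N - (q ^ (k + r) - q ^ max k r) :=
    Nat.le_of_dvd (Nat.sub_pos_of_lt hgap) <| Nat.dvd_sub hdvd <|
      Nat.dvd_sub (pow_dvd_pow q (Nat.le_add_left r k)) (pow_dvd_pow q (le_max_right k r))
  omega

end

/-- A nonempty `q^r`-divisible set of `n` `k`-subspaces of `F_q^v` with `q^r ∣ n` and
`r < k` satisfies `n ≥ q^{k+r} - q^k + q^r`. -/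
theorem divisible_set_card_lower_bound_dvd_small_r
    {F : Type} [Field F] [Fintype F] (q v k r n : ℕ)
    (hq : q = Fintype.card F) (hk : 1 ≤ k) (hr : 1 ≤ r) (hrk : r < k)
    (N : Finset (Submodule F (Fin v → F))) (hn : N.card = n) (hne : N.Nonempty)
    (hdvd : q ^ r ∣ n)
    (hdim : ∀ U ∈ N, Module.finrank F ↥U = k)
    (hdisj : ∀ U ∈ N, ∀ W ∈ N, U ≠ W → U ⊓ W = ⊥)
    (hdiv : ∀ H : Submodule F (Fin v → F), Module.finrank F ↥H = v - 1 →
      n ≡ Set.ncard {U : Submodule F (Fin v → F) | U ∈ N ∧ U ≤ H} [MOD q ^ r]) :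
    q ^ (k + r) - q ^ k + q ^ r ≤ n := by
  subst hn
  obtain rfl : q = Nat.card F := hq.trans Nat.card_eq_fintype_card.symm
  have hN : IsDivisibleSet_s11 (Nat.card F ^ r) N := by
    refine ⟨fun U hU W hW h ↦ disjoint_iff.2 (hdisj U hU W hW h), fun H hH ↦ ?_⟩
    rw [finrank_fin_fun] at hH
    simpa [← Set.ncard_coe_finset] using hdiv H (by omega)
  simpa only [max_eq_left hrk.le] using
    divisible_set_card_lower_bound_dvd_small_r_general hne hdim hN hdvd
end

section
/- Let N be a nonempty q^r-divisible set of n k-dimensional subspaces of F_q^v such that q^r divides n, and suppose r ≥ k. Then n ≥ q^{k+r}. -/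
/-!
Fix `U ∈ N` and average, over the functionals `f` vanishing on `U`, the number of members of `N`
contained in `ker f`. This number is a positive multiple of `Δ = q ^ r`, hence at least `Δ`. On the
other hand, `U` lies in every such kernel, while a member `W ≠ U` lies in a fraction `1 / |W|` of
them because `U ⊓ W = ⊥`. Therefore `Δ ≤ 1 + (n - 1) / q ^ k`, that is,
`n > q ^ k * Δ - q ^ k ≥ (q ^ k - 1) * Δ` when `q ^ k ≤ Δ`; as `n` is a multiple of `Δ`, it is at
least `q ^ k * Δ`.
-/

open Finset LinearMap Module

section Divisible

variable {F V : Type*} [Field F] [AddCommGroup V] [Module F V]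
  {N : Finset (Submodule F V)} {k Δ : ℕ}

open scoped Classical in
theorem card_filter_le_ker [Fintype (Dual F V)] (U : Submodule F V) :
    #{f : Dual F V | U ≤ ker f} = Nat.card U.dualAnnihilator :=
  (Nat.subtype_card _ fun f ↦ by simp [Submodule.mem_dualAnnihilator, SetLike.le_def]).symm

open scoped Classical in
theorem sum_card_filter_le_ker [Fintype (Dual F V)] (N : Finset (Submodule F V))
    (U : Submodule F V) :
    ∑ f : Dual F V with U ≤ ker f, #{W ∈ N | W ≤ ker f} =
      ∑ W ∈ N, Nat.card (U ⊔ W).dualAnnihilator := by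
  refine (sum_card_bipartiteAbove_eq_sum_card_bipartiteBelow fun f W ↦ W ≤ ker f).trans ?_
  simp only [bipartiteBelow, filter_filter, ← sup_le_iff, card_filter_le_ker]

variable [FiniteDimensional F V]

theorem card_mul_card_dualAnnihilator_sup_of_disjoint {U W : Submodule F V} (h : Disjoint U W) :
    Nat.card W * Nat.card (U ⊔ W).dualAnnihilator = Nat.card U.dualAnnihilator := by
  have hsup := Submodule.finrank_sup_add_finrank_inf_eq U W
  rw [h.eq_bot, finrank_bot, add_zero] at hsup
  have hU := Subspace.finrank_add_finrank_dualAnnihilator_eq U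
  have hUW := Subspace.finrank_add_finrank_dualAnnihilator_eq (U ⊔ W)
  rw [natCard_eq_pow_finrank (K := F) (V := W),
    natCard_eq_pow_finrank (K := F) (V := (U ⊔ W).dualAnnihilator),
    natCard_eq_pow_finrank (K := F) (V := U.dualAnnihilator), ← pow_add]
  congr 1
  lia

open scoped Classical in
theorem dvd_card_filter_le_ker (hdvd : Δ ∣ #N)
    (hdiv : ∀ H : Submodule F V, finrank F H + 1 = finrank F V →
      #N ≡ Set.ncard {U : Submodule F V | U ∈ N ∧ U ≤ H} [MOD Δ]) (f : Dual F V) :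
    Δ ∣ #{U ∈ N | U ≤ ker f} := by
  obtain rfl | hf := eq_or_ne f 0
  · simpa using hdvd
  · have hmod := hdiv (ker f) (Dual.finrank_ker_add_one_of_ne_zero hf)
    rw [← coe_filter, Set.ncard_coe_finset] at hmod
    exact (hmod.dvd_iff dvd_rfl).mp hdvd

variable [Finite F]

theorem pow_mul_sum_card_dualAnnihilator_sup_le {U : Submodule F V} (hU : U ∈ N)
    (hdim : ∀ W ∈ N, k ≤ finrank F W) (hdisj : ∀ W ∈ N, W ≠ U → Disjoint U W) :
    Nat.card F ^ k * ∑ W ∈ N, Nat.card (U ⊔ W).dualAnnihilator ≤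
      (Nat.card F ^ k + (#N - 1)) * Nat.card U.dualAnnihilator := by
  classical
  have hother : ∀ W ∈ N.erase U,
      Nat.card F ^ k * Nat.card (U ⊔ W).dualAnnihilator ≤ Nat.card U.dualAnnihilator := by
    intro W hW
    obtain ⟨hWU, hWN⟩ := mem_erase.mp hW
    rw [← card_mul_card_dualAnnihilator_sup_of_disjoint (hdisj W hWN hWU),
      natCard_eq_pow_finrank (K := F) (V := W)]
    gcongr
    exacts [Nat.card_pos, hdim W hWN]
  rw [← add_sum_erase N _ hU, sup_idem, mul_add, mul_sum, add_mul, ← card_erase_of_mem hU,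
    ← smul_eq_mul #(N.erase U)]
  gcongr
  exact sum_le_card_nsmul _ _ _ hother

open scoped Classical in
theorem pow_mul_le_of_dvd_card_filter_le_ker {U : Submodule F V} (hU : U ∈ N)
    (hdim : ∀ W ∈ N, k ≤ finrank F W) (hdisj : ∀ W ∈ N, W ≠ U → Disjoint U W)
    (hdvd : ∀ f : Dual F V, U ≤ ker f → Δ ∣ #{W ∈ N | W ≤ ker f}) :
    Nat.card F ^ k * Δ ≤ Nat.card F ^ k + (#N - 1) := by
  have : Finite (Dual F V) := finite_of_finite F
  cases nonempty_fintype (Dual F V)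
  have hle : ∀ f ∈ ({f | U ≤ ker f} : Finset (Dual F V)), Δ ≤ #{W ∈ N | W ≤ ker f} := by
    intro f hf
    have hUf : U ≤ ker f := (mem_filter.mp hf).2
    exact Nat.le_of_dvd (card_pos.mpr ⟨U, mem_filter.mpr ⟨hU, hUf⟩⟩) (hdvd f hUf)
  refine Nat.le_of_mul_le_mul_right ?_ (Nat.card_pos (α := U.dualAnnihilator))
  calc Nat.card F ^ k * Δ * Nat.card U.dualAnnihilator
      = Nat.card F ^ k * (#{f : Dual F V | U ≤ ker f} • Δ) := by
        rw [card_filter_le_ker, smul_eq_mul, mul_right_comm, mul_assoc]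
    _ ≤ Nat.card F ^ k * ∑ f : Dual F V with U ≤ ker f, #{W ∈ N | W ≤ ker f} := by
        gcongr
        exact card_nsmul_le_sum _ _ _ hle
    _ = Nat.card F ^ k * ∑ W ∈ N, Nat.card (U ⊔ W).dualAnnihilator := by
        rw [sum_card_filter_le_ker]
    _ ≤ (Nat.card F ^ k + (#N - 1)) * Nat.card U.dualAnnihilator :=
        pow_mul_sum_card_dualAnnihilator_sup_le hU hdim hdisj

theorem divisible_set_card_lower_bound_dvd_large_r_general (hΔ : Nat.card F ^ k ≤ Δ)
    (hne : N.Nonempty) (hdvd : Δ ∣ #N) (hdim : ∀ U ∈ N, k ≤ finrank F U)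
    (hdisj : (N : Set (Submodule F V)).PairwiseDisjoint id)
    (hdiv : ∀ H : Submodule F V, finrank F H + 1 = finrank F V →
      #N ≡ Set.ncard {U : Submodule F V | U ∈ N ∧ U ≤ H} [MOD Δ]) :
    Nat.card F ^ k * Δ ≤ #N := by
  obtain ⟨U, hU⟩ := hne
  have hbound : Nat.card F ^ k * Δ ≤ Nat.card F ^ k + (#N - 1) :=
    pow_mul_le_of_dvd_card_filter_le_ker hU hdim (fun W hW hWU ↦ hdisj hU hW hWU.symm)
      fun f _ ↦ dvd_card_filter_le_ker hdvd hdiv f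
  have hpos : 0 < #N := card_pos.mpr ⟨U, hU⟩
  obtain ⟨m, hm⟩ := hdvd
  have hlt : Nat.card F ^ k * Δ < (m + 1) * Δ := by
    rw [add_one_mul, mul_comm m, ← hm]
    lia
  rw [hm, mul_comm Δ]
  gcongr
  exact Nat.lt_succ_iff.mp (lt_of_mul_lt_mul_right hlt Δ.zero_le)

end Divisible

/-- A nonempty `q^r`-divisible set of `n` `k`-subspaces of `F_q^v` with `q^r ∣ n` and
`r ≥ k` satisfies `n ≥ q^{k+r}`. -/
theorem divisible_set_card_lower_bound_dvd_large_r
    {F : Type} [Field F] [Fintype F] (q v k r n : ℕ)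
    (hq : q = Fintype.card F) (hk : 1 ≤ k) (hr : 1 ≤ r) (hrk : k ≤ r)
    (N : Finset (Submodule F (Fin v → F))) (hn : N.card = n) (hne : N.Nonempty)
    (hdvd : q ^ r ∣ n)
    (hdim : ∀ U ∈ N, Module.finrank F ↥U = k)
    (hdisj : ∀ U ∈ N, ∀ W ∈ N, U ≠ W → U ⊓ W = ⊥)
    (hdiv : ∀ H : Submodule F (Fin v → F), Module.finrank F ↥H = v - 1 →
      n ≡ Set.ncard {U : Submodule F (Fin v → F) | U ∈ N ∧ U ≤ H} [MOD q ^ r]) :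
    q ^ (k + r) ≤ n := by
  obtain rfl : q = Nat.card F := hq.trans Nat.card_eq_fintype_card.symm
  subst hn
  rw [pow_add]
  exact divisible_set_card_lower_bound_dvd_large_r_general (pow_le_pow_right₀ Nat.card_pos hrk) hne
    hdvd (fun U hU ↦ (hdim U hU).ge) (fun U hU W hW h ↦ disjoint_iff.mpr (hdisj U hU W hW h))
    fun H hH ↦ hdiv H (by rw [finrank_fin_fun] at hH; lia)
end
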